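/- Let (N, 𝔖) be a regular set system with |N| = n ≥ 1 and let v, u be capacities on 𝔖 such that for every maximal chain C ∈ 𝒞(𝔖) and every i, p^{u,C}_i > 0. Then the relative entropy satisfies H(v; u) ≥ 0, and H(v; u) = 0 if and only if v ≡ u. -/

import Mathlib

open Finset

variable {α : Type*} [DecidableEq α] [Fintype α]

/-- `c = (c 0, …, c m)` is a maximal chain of the set system `S`:
`∅ = c 0 ⊊ c 1 ⊊ ⋯ ⊊ c m = N`, each `c i ∈ S`, and no element of `S` lies strictly
between consecutive elements. Its length is `m`. -/
def IsMaxChainOf (S : Finset (Finset α)) (m : ℕ) (c : Fin (m + 1) → Finset α) : Prop :=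
  c 0 = ∅ ∧ c (Fin.last m) = Finset.univ ∧ (∀ i, c i ∈ S) ∧
    (∀ i : Fin m, c i.castSucc ⊂ c i.succ) ∧
    (∀ i : Fin m, ∀ x ∈ S, ¬(c i.castSucc ⊂ x ∧ x ⊂ c i.succ))

/-- `(N, S)` is a regular set system: `∅, N ∈ S` and every maximal chain has length `|N|`. -/
def IsRegularSetSystem (S : Finset (Finset α)) : Prop :=
  ∅ ∈ S ∧ Finset.univ ∈ S ∧
    ∀ (m : ℕ) (c : Fin (m + 1) → Finset α), IsMaxChainOf S m c → m = Fintype.card α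

/-- A capacity on the set system `S`: a `[0,1]`-valued, monotone set function
with `v ∅ = 0` and `v N = 1`. -/
def IsCapacity (S : Finset (Finset α)) (v : Finset α → ℝ) : Prop :=
  v ∅ = 0 ∧ v Finset.univ = 1 ∧ (∀ A ∈ S, 0 ≤ v A ∧ v A ≤ 1) ∧
    ∀ A ∈ S, ∀ B ∈ S, A ⊆ B → v A ≤ v B

/-- `h(x) = -x log₂ x` (with the convention `0 log 0 = 0`, satisfied by `Real.logb`). -/
noncomputable def hfun (x : ℝ) : ℝ := -(x * Real.logb 2 x)

/-- Shannon entropy of a probability distribution. -/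
noncomputable def shannonEntropy {m : ℕ} (p : Fin m → ℝ) : ℝ := ∑ i, hfun (p i)

/-- The increment distribution `p^{v,C}` along a chain `c`. -/
def chainDist (v : Finset α → ℝ) {m : ℕ} (c : Fin (m + 1) → Finset α) : Fin m → ℝ :=
  fun i => v (c i.succ) - v (c i.castSucc)

/-- The maximal chains of `S` (of length `|N|`; in a regular set system these are
all the maximal chains). -/
noncomputable def maxChains (S : Finset (Finset α)) :
    Finset (Fin (Fintype.card α + 1) → Finset α) :=
  @Finset.filter _ (fun c => IsMaxChainOf S (Fintype.card α) c) (Classical.decPred _)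
    Finset.univ

/-- The entropy `H(v)` of a capacity `v` on a regular set system. -/
noncomputable def capEntropy (S : Finset (Finset α)) (v : Finset α → ℝ) : ℝ :=
  (1 / ((maxChains S).card : ℝ)) * ∑ c ∈ maxChains S, shannonEntropy (chainDist v c)

/-- Shannon relative entropy `H_S(p; q) = Σ p_i log₂ (p_i/q_i)`. -/
noncomputable def relEntropyFun {m : ℕ} (p q : Fin m → ℝ) : ℝ :=
  ∑ i, p i * Real.logb 2 (p i / q i)

/-- The relative entropy `H(v; u)` of capacities on a regular set system. -/
noncomputable def capRelEntropy (S : Finset (Finset α)) (v u : Finset α → ℝ) : ℝ :=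
  (1 / ((maxChains S).card : ℝ)) *
    ∑ c ∈ maxChains S, relEntropyFun (chainDist v c) (chainDist u c)

/-!
Gibbs' inequality holds term by term: `p log (p / q) = q klFun (p / q) + (p - q)` with
`klFun x = x log x + 1 - x ≥ 0` vanishing only at `1`, and the corrections `p - q` cancel when `p`
and `q` have the same sum. Along a maximal chain the increments of `v` and `u` telescope to the same
total, so each chain contributes a nonnegative amount to the relative entropy, which is zero exactly
when `v` and `u` agree along that chain. Every member of a regular set system lies on some maximal
chain, so agreement along all chains is agreement on the whole system.
-/

section Gibbs

open InformationTheory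

variable {m : ℕ} {p q : Fin m → ℝ}

theorem relEntropyFun_eq_sum_klFun_div_log (hq : ∀ i, q i ≠ 0) (hpq : ∑ i, p i = ∑ i, q i) :
    relEntropyFun p q = (∑ i, q i * klFun (p i / q i)) / Real.log 2 := by
  have klFun_term : ∀ i, q i * klFun (p i / q i) = p i * Real.log (p i / q i) + (q i - p i) := by
    intro i
    have := hq i
    rw [klFun_apply]
    field_simp
    ring
  simp only [klFun_term, sum_add_distrib, sum_sub_distrib, hpq, sub_self, add_zero,
    relEntropyFun, Real.logb, sum_div, mul_div_assoc]

theorem mul_klFun_div_nonneg {x y : ℝ} (hx : 0 ≤ x) (hy : 0 ≤ y) : 0 ≤ y * klFun (x / y) :=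
  mul_nonneg hy (klFun_nonneg (div_nonneg hx hy))

theorem mul_klFun_div_eq_zero_iff {x y : ℝ} (hx : 0 ≤ x) (hy : 0 < y) :
    y * klFun (x / y) = 0 ↔ x = y := by
  rw [mul_eq_zero_iff_left hy.ne', klFun_eq_zero_iff (div_nonneg hx hy.le),
    div_eq_one_iff_eq hy.ne']

theorem relEntropyFun_nonneg (hp : ∀ i, 0 ≤ p i) (hq : ∀ i, 0 < q i)
    (hpq : ∑ i, p i = ∑ i, q i) : 0 ≤ relEntropyFun p q := by
  rw [relEntropyFun_eq_sum_klFun_div_log (fun i => (hq i).ne') hpq]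
  exact div_nonneg (sum_nonneg fun i _ => mul_klFun_div_nonneg (hp i) (hq i).le)
    (Real.log_nonneg one_le_two)

theorem relEntropyFun_eq_zero_iff (hp : ∀ i, 0 ≤ p i) (hq : ∀ i, 0 < q i)
    (hpq : ∑ i, p i = ∑ i, q i) : relEntropyFun p q = 0 ↔ p = q := by
  rw [relEntropyFun_eq_sum_klFun_div_log (fun i => (hq i).ne') hpq,
    div_eq_zero_iff, or_iff_left (Real.log_pos one_lt_two).ne',
    sum_eq_zero_iff_of_nonneg fun i _ => mul_klFun_div_nonneg (hp i) (hq i).le]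
  simp only [mem_univ, true_imp_iff, mul_klFun_div_eq_zero_iff (hp _) (hq _), funext_iff]

end Gibbs

section ChainDist

variable {N : Type*} {m : ℕ}

theorem sum_chainDist (v : Finset N → ℝ) (c : Fin (m + 1) → Finset N) :
    ∑ i, chainDist v c i = v (c (Fin.last m)) - v (c 0) := by
  simp only [chainDist, sum_sub_distrib]
  linarith [Fin.sum_univ_succ fun i => v (c i), Fin.sum_univ_castSucc fun i => v (c i)]

theorem chainDist_eq_chainDist_iff {v u : Finset N → ℝ} {c : Fin (m + 1) → Finset N}
    (h₀ : v (c 0) = u (c 0)) :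
    chainDist v c = chainDist u c ↔ ∀ i, v (c i) = u (c i) := by
  refine ⟨fun h i => ?_, fun h => funext fun i => by simp only [chainDist, h]⟩
  induction i using Fin.induction with
  | zero => exact h₀
  | succ i ih =>
    have increments_eq : v (c i.succ) - v (c i.castSucc) = u (c i.succ) - u (c i.castSucc) :=
      congrFun h i
    linarith

end ChainDist

section MaxChain

variable {N : Type*} [Fintype N] {S : Finset (Finset N)} {v u : Finset N → ℝ}

namespace IsMaxChainOf

variable {m : ℕ} {c : Fin (m + 1) → Finset N}

theorem chainDist_nonneg (hc : IsMaxChainOf S m c) (hv : MonotoneOn v S) (i : Fin m) :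
    0 ≤ chainDist v c i := by
  obtain ⟨-, -, mem, lt, -⟩ := hc
  exact sub_nonneg.2 (hv (mem _) (mem _) (lt i).subset)

theorem sum_chainDist_eq (hc : IsMaxChainOf S m c) (h_empty : v ∅ = u ∅)
    (h_univ : v univ = u univ) : ∑ i, chainDist v c i = ∑ i, chainDist u c i := by
  rw [sum_chainDist, sum_chainDist, hc.1, hc.2.1, h_empty, h_univ]

theorem relEntropyFun_chainDist_nonneg (hc : IsMaxChainOf S m c) (hv : MonotoneOn v S)
    (h_empty : v ∅ = u ∅) (h_univ : v univ = u univ) (hu : ∀ i, 0 < chainDist u c i) :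
    0 ≤ relEntropyFun (chainDist v c) (chainDist u c) :=
  relEntropyFun_nonneg (hc.chainDist_nonneg hv) hu (hc.sum_chainDist_eq h_empty h_univ)

theorem relEntropyFun_chainDist_eq_zero_iff (hc : IsMaxChainOf S m c) (hv : MonotoneOn v S)
    (h_empty : v ∅ = u ∅) (h_univ : v univ = u univ) (hu : ∀ i, 0 < chainDist u c i) :
    relEntropyFun (chainDist v c) (chainDist u c) = 0 ↔ ∀ i, v (c i) = u (c i) := by
  rw [relEntropyFun_eq_zero_iff (hc.chainDist_nonneg hv) hu (hc.sum_chainDist_eq h_empty h_univ),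
    chainDist_eq_chainDist_iff (by rw [hc.1, h_empty])]

end IsMaxChainOf

theorem exists_isMaxChainOf_mem_range (h_empty : ∅ ∈ S) (h_univ : univ ∈ S) {A : Finset N}
    (hA : A ∈ S) : ∃ m c, IsMaxChainOf S m c ∧ A ∈ Set.range c := by
  let : BoundedOrder S :=
    { Subtype.orderBot (p := (· ∈ S)) h_empty, Subtype.orderTop (p := (· ∈ S)) h_univ with }
  obtain ⟨t, i, ht, head_eq, last_eq⟩ :=
    LTSeries.exists_relSeries_covBy_and_head_eq_bot_and_last_eq_bot
      (RelSeries.singleton _ (⟨A, hA⟩ : S))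
  refine ⟨t.length, fun j => t j, ⟨congrArg Subtype.val head_eq, congrArg Subtype.val last_eq,
    fun j => (t j).2, fun j => (t.step j).lt, fun j B hB hlt => ?_⟩,
    i 0, congrArg Subtype.val (congrFun ht 0)⟩
  exact (t.step j).2 (c := ⟨B, hB⟩) hlt.1 hlt.2

theorem mem_maxChains {c : Fin (Fintype.card N + 1) → Finset N} :
    c ∈ maxChains S ↔ IsMaxChainOf S (Fintype.card N) c := by
  simp [maxChains]

namespace IsRegularSetSystem

theorem exists_mem_maxChains_mem_range (hS : IsRegularSetSystem S) {A : Finset N} (hA : A ∈ S) :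
    ∃ c ∈ maxChains S, A ∈ Set.range c := by
  obtain ⟨h_empty, h_univ, length_eq⟩ := hS
  obtain ⟨m, c, hc, hAc⟩ := exists_isMaxChainOf_mem_range h_empty h_univ hA
  obtain rfl := length_eq m c hc
  exact ⟨c, mem_maxChains.2 hc, hAc⟩

theorem maxChains_nonempty (hS : IsRegularSetSystem S) : (maxChains S).Nonempty :=
  let ⟨c, hc, _⟩ := hS.exists_mem_maxChains_mem_range hS.1
  ⟨c, hc⟩

theorem forall_maxChains_iff (hS : IsRegularSetSystem S) {P : Finset N → Prop} :
    (∀ c ∈ maxChains S, ∀ i, P (c i)) ↔ ∀ A ∈ S, P A := by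
  refine ⟨fun h A hA => ?_, fun h c hc i => h _ ((mem_maxChains.1 hc).2.2.1 i)⟩
  obtain ⟨c, hc, i, rfl⟩ := hS.exists_mem_maxChains_mem_range hA
  exact h c hc i

end IsRegularSetSystem

theorem IsCapacity.monotoneOn (hv : IsCapacity S v) : MonotoneOn v S :=
  fun A hA B hB => hv.2.2.2 A hA B hB

theorem capRelEntropy_nonneg (hv : MonotoneOn v S) (h_empty : v ∅ = u ∅)
    (h_univ : v univ = u univ) (hu : ∀ c ∈ maxChains S, ∀ i, 0 < chainDist u c i) :
    0 ≤ capRelEntropy S v u :=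
  mul_nonneg (by positivity) <| sum_nonneg fun c hc =>
    (mem_maxChains.1 hc).relEntropyFun_chainDist_nonneg hv h_empty h_univ (hu c hc)

theorem capRelEntropy_eq_zero_iff (hS : IsRegularSetSystem S) (hv : MonotoneOn v S)
    (h_empty : v ∅ = u ∅) (h_univ : v univ = u univ)
    (hu : ∀ c ∈ maxChains S, ∀ i, 0 < chainDist u c i) :
    capRelEntropy S v u = 0 ↔ ∀ A ∈ S, v A = u A := by
  have card_inv_ne_zero : 1 / ((maxChains S).card : ℝ) ≠ 0 :=
    one_div_ne_zero (Nat.cast_ne_zero.2 hS.maxChains_nonempty.card_ne_zero)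
  rw [capRelEntropy, mul_eq_zero_iff_left card_inv_ne_zero,
    sum_eq_zero_iff_of_nonneg fun c hc =>
      (mem_maxChains.1 hc).relEntropyFun_chainDist_nonneg hv h_empty h_univ (hu c hc),
    ← hS.forall_maxChains_iff]
  exact forall₂_congr fun c hc =>
    (mem_maxChains.1 hc).relEntropyFun_chainDist_eq_zero_iff hv h_empty h_univ (hu c hc)

end MaxChain

/-- the relative entropy of capacities on a regular set system is
nonnegative, and vanishes iff the two capacities coincide (assuming the increments
of `u` along every maximal chain are positive). -/
theorem capRelEntropy_nonneg_and_eq_zero_iff (S : Finset (Finset α))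
    (hS : IsRegularSetSystem S) (hn : 1 ≤ Fintype.card α)
    (v u : Finset α → ℝ) (hv : IsCapacity S v) (hu : IsCapacity S u)
    (hupos : ∀ c ∈ maxChains S, ∀ i : Fin (Fintype.card α), 0 < chainDist u c i) :
    0 ≤ capRelEntropy S v u ∧ (capRelEntropy S v u = 0 ↔ ∀ A ∈ S, v A = u A) := by
  have h_empty : v ∅ = u ∅ := hv.1.trans hu.1.symm
  have h_univ : v univ = u univ := hv.2.1.trans hu.2.1.symm
  exact ⟨capRelEntropy_nonneg hv.monotoneOn h_empty h_univ hupos,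
    capRelEntropy_eq_zero_iff hS hv.monotoneOn h_empty h_univ hupos⟩
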